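/- Let 1 < α < 2, A a bounded linear operator on a Banach space E, S_α(t) = E_α(t^α A), and f : [0,∞) → E continuous. Then for t ≥ 0, ∫_0^t J_t S_α(t-τ) ^{RL}D_τ^{2-α} f(τ) dτ = ∫_0^t (t-τ)^{α-1} E_{α,α}((t-τ)^α A) f(τ) dτ, where J_t denotes the first-order integral in t and ^{RL}D^{2-α} the Riemann–Liouville derivative of order 2-α. -/

import Mathlib

open Real MeasureTheory intervalIntegral

/-- Operator-valued two-parameter Mittag-Leffler function. -/
noncomputable def opML {E : Type*} [NormedAddCommGroup E] [NormedSpace ℝ E]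
    (α β : ℝ) (A : E →L[ℝ] E) (t : ℝ) : E →L[ℝ] E :=
  ∑' n : ℕ, (t ^ ((n : ℝ) * α) / Real.Gamma (β + n * α)) • A ^ n

/-- Vector-valued Riemann–Liouville fractional integral. -/
noncomputable def jFrac {E : Type*} [NormedAddCommGroup E] [NormedSpace ℝ E]
    (γ : ℝ) (f : ℝ → E) (t : ℝ) : E :=
  (1 / Real.Gamma γ) • ∫ τ in (0:ℝ)..t, (t - τ) ^ (γ - 1) • f τ

/-! Write `K_β(t) = t^{β-1} E_{α,β}(t^α A)`. Expanding in powers of `A` gives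
`K_β * g = ∑ Aⁿ J^{β+nα} g`, so the semigroup law `J^a J^b = J^{a+b}` yields
`K_β * J^b g = K_{β+b} * g`. Since `J S_α = K_2` and `G = ^{RL}D^{2-α} f` satisfies
`J^1 G = J^{α-1} f`, the theorem is the chain
`K_2 * G = K_1 * J^1 G = K_1 * J^{α-1} f = K_α * f`. -/

section GammaBounds

lemma rpow_mul_exp_neg_le_Gamma {r x : ℝ} (hr : 0 ≤ r) (hx : 1 ≤ x) :
    r ^ (x - 1) * exp (-r) ≤ Real.Gamma x := by
  have hx0 : 0 < x := by linarith
  have hΓ := Real.GammaIntegral_convergent hx0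
  have hsub : Set.Ioi r ⊆ Set.Ioi 0 := Set.Ioi_subset_Ioi hr
  calc r ^ (x - 1) * exp (-r) = ∫ u in Set.Ioi r, r ^ (x - 1) * exp (-u) := by
        rw [MeasureTheory.integral_const_mul, integral_exp_neg_Ioi]
    _ ≤ ∫ u in Set.Ioi r, exp (-u) * u ^ (x - 1) := by
        refine setIntegral_mono_on ((integrableOn_exp_neg_Ioi r).const_mul _) (hΓ.mono_set hsub)
          measurableSet_Ioi fun u hu => ?_
        rw [mul_comm]
        gcongr
        exact (Set.mem_Ioi.1 hu).le
    _ ≤ ∫ u in Set.Ioi 0, exp (-u) * u ^ (x - 1) :=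
        setIntegral_mono_set hΓ
          (ae_restrict_of_forall_mem measurableSet_Ioi fun u (hu : 0 < u) => by positivity)
          hsub.eventuallyLE
    _ = Real.Gamma x := (Real.Gamma_eq_integral hx0).symm

lemma summable_pow_div_Gamma {α : ℝ} (hα : 0 < α) (β z : ℝ) :
    Summable fun n : ℕ => z ^ n / Real.Gamma (β + n * α) := by
  have hz : 0 < |z| + 1 := by positivity
  set r : ℝ := (|z| + 1) ^ α⁻¹
  have hr0 : 0 < r := rpow_pos_of_pos hz _
  have hrα : r ^ α = |z| + 1 := rpow_inv_rpow hz.le hα.ne'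
  have hgeom : Summable fun n : ℕ => (|z| / (|z| + 1)) ^ n / (r ^ (β - 1) * exp (-r)) :=
    (summable_geometric_of_lt_one (by positivity)
      ((div_lt_one hz).2 (lt_add_one _))).div_const _
  have hlarge : ∀ᶠ n : ℕ in Filter.atTop, 1 ≤ β + n * α :=
    (Filter.tendsto_atTop_add_const_left _ β
      (tendsto_natCast_atTop_atTop.atTop_mul_const hα)).eventually_ge_atTop 1
  refine hgeom.of_norm_bounded_eventually_nat ?_
  filter_upwards [hlarge] with n hn
  have hpow : r ^ (β + n * α - 1) = r ^ (β - 1) * (|z| + 1) ^ n := by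
    rw [add_sub_right_comm, rpow_add hr0, mul_comm (n : ℝ), rpow_mul_natCast hr0.le, hrα]
  have hΓ := rpow_mul_exp_neg_le_Gamma hr0.le hn
  rw [hpow] at hΓ
  calc ‖z ^ n / Real.Gamma (β + n * α)‖ = |z| ^ n / Real.Gamma (β + n * α) := by
        rw [norm_div, norm_pow, Real.norm_eq_abs,
          Real.norm_of_nonneg (Real.Gamma_nonneg_of_nonneg (by linarith))]
    _ ≤ |z| ^ n / (r ^ (β - 1) * (|z| + 1) ^ n * exp (-r)) := by gcongr
    _ = (|z| / (|z| + 1)) ^ n / (r ^ (β - 1) * exp (-r)) := by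
        rw [div_pow, div_div]
        ring_nf

end GammaBounds

section BetaIntegral

variable {a b s t : ℝ}

lemma integral_rpow_mul_sub_rpow (ha : 0 < a) (hb : 0 < b) (ht : 0 < t) :
    ∫ x in (0:ℝ)..t, x ^ (a - 1) * (t - x) ^ (b - 1)
      = t ^ (a + b - 1) * ProbabilityTheory.beta a b := by
  have hcomplex : ∫ x in (0:ℝ)..t, (x : ℂ) ^ ((a : ℂ) - 1) * ((t : ℂ) - x) ^ ((b : ℂ) - 1)
      = ∫ x in (0:ℝ)..t, ((x ^ (a - 1) * (t - x) ^ (b - 1) : ℝ) : ℂ) := by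
    refine integral_congr_Ioo_of_le ht.le fun x hx => ?_
    push_cast [Complex.ofReal_cpow hx.1.le, Complex.ofReal_cpow (sub_nonneg.2 hx.2.le)]
    rfl
  have h := Complex.betaIntegral_scaled a b ht
  rw [hcomplex, intervalIntegral.integral_ofReal,
    Complex.betaIntegral_eq_Gamma_mul_div _ _ (by simpa) (by simpa)] at h
  apply Complex.ofReal_injective
  rw [h, ProbabilityTheory.beta]
  push_cast [Complex.ofReal_cpow ht.le, ← Complex.Gamma_ofReal]
  rfl

lemma integral_sub_rpow_mul_sub_rpow (ha : 0 < a) (hb : 0 < b) (hst : s < t) :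
    ∫ τ in s..t, (t - τ) ^ (a - 1) * (τ - s) ^ (b - 1)
      = (t - s) ^ (a + b - 1) * ProbabilityTheory.beta a b := by
  have h := intervalIntegral.integral_comp_sub_left
    (fun x : ℝ => x ^ (a - 1) * (t - s - x) ^ (b - 1)) t (a := s) (b := t)
  rw [sub_self, integral_rpow_mul_sub_rpow ha hb (sub_pos.2 hst)] at h
  simpa only [sub_sub_sub_cancel_left] using h

lemma intervalIntegrable_sub_rpow_mul_sub_rpow (ha : 0 < a) (hb : 0 < b) (hst : s < t) :
    IntervalIntegrable (fun τ => (t - τ) ^ (a - 1) * (τ - s) ^ (b - 1)) volume s t := by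
  refine intervalIntegrable_of_integral_ne_zero ?_
  rw [integral_sub_rpow_mul_sub_rpow ha hb hst]
  exact (mul_pos (rpow_pos_of_pos (sub_pos.2 hst) _) (ProbabilityTheory.beta_pos ha hb)).ne'

end BetaIntegral

/-- The open triangle `a < s < τ < b` of pairs `(s, τ)`, over which iterated integrals with a
variable endpoint are interchanged. -/
def openTriangle (a b : ℝ) : Set (ℝ × ℝ) := {p | a < p.1 ∧ p.1 < p.2 ∧ p.2 < b}

section OpenTriangle

variable {E : Type*} [NormedAddCommGroup E] {a b : ℝ} {k : ℝ → ℝ → E}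

lemma measurableSet_openTriangle : MeasurableSet (openTriangle a b) :=
  (measurableSet_lt measurable_const measurable_fst).inter
    ((measurableSet_lt measurable_fst measurable_snd).inter
      (measurableSet_lt measurable_snd measurable_const))

lemma indicator_openTriangle_eq_fst (s τ : ℝ) :
    (openTriangle a b).indicator (Function.uncurry k) (s, τ)
      = (Set.Ioo a b).indicator (fun s => (Set.Ioo s b).indicator (k s) τ) s := by
  simp only [Set.indicator_apply, openTriangle, Set.mem_ofPred_eq, Set.mem_Ioo, Function.uncurry]
  grind

lemma indicator_openTriangle_eq_snd (s τ : ℝ) :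
    (openTriangle a b).indicator (Function.uncurry k) (s, τ)
      = (Set.Ioo a b).indicator (fun τ => (Set.Ioo a τ).indicator (fun s => k s τ) s) τ := by
  simp only [Set.indicator_apply, openTriangle, Set.mem_ofPred_eq, Set.mem_Ioo, Function.uncurry]
  grind

lemma aestronglyMeasurable_fst_openTriangle {g : ℝ → E}
    (hg : AEStronglyMeasurable g (volume.restrict (Set.Ioo a b))) :
    AEStronglyMeasurable (fun p : ℝ × ℝ => g p.1) (volume.restrict (openTriangle a b)) := by
  have h : AEStronglyMeasurable (fun p : ℝ × ℝ => g p.1)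
      ((volume.restrict (Set.Ioo a b)).prod (volume.restrict Set.univ)) := hg.comp_fst
  rw [Measure.prod_restrict, ← Measure.volume_eq_prod] at h
  have hsub : openTriangle a b ⊆ Set.Ioo a b ×ˢ Set.univ :=
    fun _ hp => ⟨⟨hp.1, hp.2.1.trans hp.2.2⟩, trivial⟩
  exact h.mono_measure (Measure.restrict_mono hsub le_rfl)

lemma integral_indicator_openTriangle_fst [NormedSpace ℝ E] (s : ℝ) :
    ∫ τ, (openTriangle a b).indicator (Function.uncurry k) (s, τ)
      = (Set.Ioo a b).indicator (fun s => ∫ τ in s..b, k s τ) s := by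
  simp only [indicator_openTriangle_eq_fst]
  by_cases hs : s ∈ Set.Ioo a b
  · simp only [Set.indicator_of_mem hs]
    rw [MeasureTheory.integral_indicator measurableSet_Ioo, integral_of_le hs.2.le,
      integral_Ioc_eq_integral_Ioo]
  · simp [Set.indicator_of_notMem hs]

lemma integral_indicator_openTriangle_snd [NormedSpace ℝ E] (τ : ℝ) :
    ∫ s, (openTriangle a b).indicator (Function.uncurry k) (s, τ)
      = (Set.Ioo a b).indicator (fun τ => ∫ s in a..τ, k s τ) τ := by
  simp only [indicator_openTriangle_eq_snd]
  by_cases hτ : τ ∈ Set.Ioo a b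
  · simp only [Set.indicator_of_mem hτ]
    rw [MeasureTheory.integral_indicator measurableSet_Ioo, integral_of_le hτ.1.le,
      integral_Ioc_eq_integral_Ioo]
  · simp [Set.indicator_of_notMem hτ]

lemma integrableOn_openTriangle (hab : a ≤ b)
    (hmeas : AEStronglyMeasurable (Function.uncurry k) (volume.restrict (openTriangle a b)))
    (hfst : ∀ s ∈ Set.Ioo a b, IntervalIntegrable (k s) volume s b)
    (hnorm : IntervalIntegrable (fun s => ∫ τ in s..b, ‖k s τ‖) volume a b) :
    IntegrableOn (Function.uncurry k) (openTriangle a b) := by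
  rw [← integrable_indicator_iff measurableSet_openTriangle, Measure.volume_eq_prod,
    integrable_prod_iff (by
      rw [← Measure.volume_eq_prod]
      exact (aestronglyMeasurable_indicator_iff measurableSet_openTriangle).2 hmeas)]
  refine ⟨.of_forall fun s => ?_, ?_⟩
  · simp only [indicator_openTriangle_eq_fst]
    by_cases hs : s ∈ Set.Ioo a b
    · simp only [Set.indicator_of_mem hs]
      rw [integrable_indicator_iff measurableSet_Ioo,
        ← intervalIntegrable_iff_integrableOn_Ioo_of_le hs.2.le]
      exact hfst s hs
    · simp [Set.indicator_of_notMem hs]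
  · have hind : ∀ p : ℝ × ℝ, ‖(openTriangle a b).indicator (Function.uncurry k) p‖
        = (openTriangle a b).indicator (Function.uncurry fun s τ => ‖k s τ‖) p :=
      fun p => norm_indicator_eq_indicator_norm _ _
    simp only [hind, integral_indicator_openTriangle_fst]
    rw [integrable_indicator_iff measurableSet_Ioo]
    exact (intervalIntegrable_iff_integrableOn_Ioo_of_le hab).1 hnorm

lemma intervalIntegrable_integral_openTriangle [NormedSpace ℝ E] (hab : a ≤ b)
    (hk : IntegrableOn (Function.uncurry k) (openTriangle a b)) :
    IntervalIntegrable (fun τ => ∫ s in a..τ, k s τ) volume a b := by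
  have h := (((integrable_indicator_iff measurableSet_openTriangle).2 hk)).integral_prod_right
  simp only [integral_indicator_openTriangle_snd] at h
  rw [intervalIntegrable_iff_integrableOn_Ioo_of_le hab]
  exact (integrable_indicator_iff measurableSet_Ioo).1 h

lemma integral_openTriangle_swap [NormedSpace ℝ E] (hab : a ≤ b)
    (hk : IntegrableOn (Function.uncurry k) (openTriangle a b)) :
    ∫ τ in a..b, ∫ s in a..τ, k s τ = ∫ s in a..b, ∫ τ in s..b, k s τ := by
  have h := integral_integral_swap
    (f := fun s τ => (openTriangle a b).indicator (Function.uncurry k) (s, τ))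
    ((integrable_indicator_iff measurableSet_openTriangle).2 hk)
  simp only [integral_indicator_openTriangle_fst, integral_indicator_openTriangle_snd,
    MeasureTheory.integral_indicator measurableSet_Ioo] at h
  rw [integral_of_le hab, integral_of_le hab, integral_Ioc_eq_integral_Ioo,
    integral_Ioc_eq_integral_Ioo, h]

end OpenTriangle

section FractionalIntegral

variable {E : Type*} [NormedAddCommGroup E] [NormedSpace ℝ E] {a b c t : ℝ} {g : ℝ → E}

/-- Absolute convergence of the integral defining `jFrac γ g t`. -/
def JFracIntegrable (γ : ℝ) (g : ℝ → E) (t : ℝ) : Prop :=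
  IntervalIntegrable (fun τ => (t - τ) ^ (γ - 1) • g τ) volume 0 t

lemma jFracIntegrable_one_iff : JFracIntegrable 1 g t ↔ IntervalIntegrable g volume 0 t := by
  simp [JFracIntegrable]

lemma intervalIntegrable_sub_rpow (hb : 0 < b) (t : ℝ) :
    IntervalIntegrable (fun τ => (t - τ) ^ (b - 1)) volume 0 t := by
  have h := (intervalIntegrable_rpow' (a := t) (b := 0)
    (by linarith : -1 < b - 1)).comp_sub_left t
  rwa [sub_self, sub_zero] at h

lemma jFracIntegrable_of_continuousOn (hb : 0 < b) (hg : ContinuousOn g (Set.uIcc 0 t)) :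
    JFracIntegrable b g t :=
  (intervalIntegrable_sub_rpow hb t).smul_continuousOn hg

lemma sub_rpow_smul_sub_rpow_smul {s : ℝ} (hs : s < t) (b c : ℝ) (x : E) :
    (t - s) ^ c • (t - s) ^ (b - 1) • x = (t - s) ^ (b + c - 1) • x := by
  rw [smul_smul, ← rpow_add (sub_pos.2 hs)]
  ring_nf

lemma JFracIntegrable.mono (ht : 0 ≤ t) (hbc : b ≤ c) (hg : JFracIntegrable b g t) :
    JFracIntegrable c g t := by
  have hcont : ContinuousOn (fun τ => (t - τ) ^ (c - b)) (Set.uIcc 0 t) :=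
    ((continuous_const.sub continuous_id).rpow_const fun _ =>
      Or.inr (sub_nonneg.2 hbc)).continuousOn
  refine (hg.continuousOn_smul hcont).congr_uIoo fun τ hτ => ?_
  rw [Set.uIoo_of_le ht] at hτ
  simpa only [add_sub_cancel] using sub_rpow_smul_sub_rpow_smul hτ.2 b (c - b) (g τ)

lemma JFracIntegrable.aestronglyMeasurable (ht : 0 ≤ t) (hg : JFracIntegrable b g t) :
    AEStronglyMeasurable g (volume.restrict (Set.Ioo 0 t)) := by
  have hmeas := ((intervalIntegrable_iff_integrableOn_Ioo_of_le ht).1 hg).aestronglyMeasurable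
  have hpow : Measurable fun τ => (t - τ) ^ (1 - b) := by fun_prop
  refine (hpow.aestronglyMeasurable.smul hmeas).congr
    (ae_restrict_of_forall_mem measurableSet_Ioo fun τ hτ => ?_)
  simpa using sub_rpow_smul_sub_rpow_smul hτ.2 b (1 - b) (g τ)

lemma jFrac_one (g : ℝ → E) (t : ℝ) : jFrac 1 g t = ∫ τ in (0:ℝ)..t, g τ := by
  simp [jFrac]

lemma jFrac_const [CompleteSpace E] (hb : 0 < b) (t : ℝ) (x : E) :
    jFrac b (fun _ => x) t = (t ^ b / Real.Gamma (b + 1)) • x := by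
  have hΓ := (Real.Gamma_pos_of_pos hb).ne'
  rw [jFrac, intervalIntegral.integral_smul_const,
    intervalIntegral.integral_comp_sub_left (fun u : ℝ => u ^ (b - 1)) t, sub_self, sub_zero,
    integral_rpow (Or.inl (by linarith)), sub_add_cancel, zero_rpow hb.ne', sub_zero, smul_smul,
    Real.Gamma_add_one hb.ne']
  congr 1
  field_simp

lemma jFrac_congr (ht : 0 ≤ t) {f : ℝ → E} (h : Set.EqOn f g (Set.Ioo 0 t)) :
    jFrac b f t = jFrac b g t := by
  rw [jFrac, jFrac]
  congr 1
  exact integral_congr_Ioo_of_le ht fun s hs => by rw [h hs]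

lemma jFrac_eq_smul_integral_unit (hb : 0 < b) (ht : 0 ≤ t) (g : ℝ → E) :
    jFrac b g t
      = (1 / Real.Gamma b) • t ^ b • ∫ v in (0:ℝ)..1, (1 - v) ^ (b - 1) • g (t * v) := by
  rw [jFrac]
  congr 1
  rcases ht.eq_or_lt with rfl | ht
  · simp [zero_rpow hb.ne']
  have hscale := intervalIntegral.smul_integral_comp_mul_left
    (fun s => (t - s) ^ (b - 1) • g s) t (a := 0) (b := 1)
  rw [mul_zero, mul_one] at hscale
  rw [← hscale, ← intervalIntegral.integral_smul, ← intervalIntegral.integral_smul]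
  refine integral_congr_Ioo_of_le zero_le_one fun v hv => ?_
  have hfactor : t - t * v = t * (1 - v) := by ring
  simp only [hfactor, mul_rpow ht.le (sub_nonneg.2 hv.2.le), smul_smul]
  rw [← mul_assoc, mul_comm t, ← rpow_add_one ht.ne', sub_add_cancel]

lemma continuousOn_jFrac (hb : 0 < b) (hg : ContinuousOn g (Set.Icc 0 t)) :
    ContinuousOn (jFrac b g) (Set.Icc 0 t) := by
  obtain ⟨C, hC⟩ := isCompact_Icc.exists_bound_of_continuousOn hg
  have hmaps : ∀ s ∈ Set.Icc 0 t, ∀ v ∈ Set.uIoc (0 : ℝ) 1, s * v ∈ Set.Icc 0 t :=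
    fun s hs v hv => by
      rw [Set.uIoc_of_le zero_le_one] at hv
      exact ⟨mul_nonneg hs.1 hv.1.le, (mul_le_of_le_one_right hs.1 hv.2).trans hs.2⟩
  refine ContinuousOn.congr (f := fun s => (1 / Real.Gamma b) • s ^ b •
      ∫ v in (0:ℝ)..1, (1 - v) ^ (b - 1) • g (s * v)) ?_
    fun s hs => jFrac_eq_smul_integral_unit hb hs.1 g
  refine ((continuousOn_id.rpow_const fun _ _ => Or.inr hb.le).smul fun s₀ hs₀ => ?_).const_smul _
  refine continuousWithinAt_of_dominated_interval (bound := fun v => (1 - v) ^ (b - 1) * C)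
    ?_ ?_ ((intervalIntegrable_sub_rpow hb 1).mul_const C) (.of_forall fun v hv => ?_)
  · filter_upwards [self_mem_nhdsWithin] with s hs
    have hpow : Measurable fun v : ℝ => (1 - v) ^ (b - 1) := by fun_prop
    refine hpow.aestronglyMeasurable.smul (ContinuousOn.aestronglyMeasurable ?_ measurableSet_uIoc)
    exact hg.comp (continuous_const_mul s).continuousOn (hmaps s hs)
  · filter_upwards [self_mem_nhdsWithin] with s hs
    refine .of_forall fun v hv => ?_
    have hv1 : v ≤ 1 := (Set.uIoc_of_le (zero_le_one' ℝ) ▸ hv).2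
    have hpow : 0 ≤ (1 - v) ^ (b - 1) := rpow_nonneg (sub_nonneg.2 hv1) _
    rw [norm_smul, Real.norm_of_nonneg hpow]
    exact mul_le_mul_of_nonneg_left (hC _ (hmaps s hs v hv)) hpow
  · exact (hg.comp (continuous_mul_const v).continuousOn
      fun s hs => hmaps s hs v hv).const_smul _ s₀ hs₀

lemma JFracIntegrable.integrableOn_openTriangle (ha : 0 < a) (hb : 0 < b) (ht : 0 ≤ t)
    (hg : JFracIntegrable (a + b) g t) :
    IntegrableOn (Function.uncurry fun s τ => (t - τ) ^ (a - 1) • (τ - s) ^ (b - 1) • g s)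
      (openTriangle 0 t) := by
  refine _root_.integrableOn_openTriangle ht ?_ (fun s hs => ?_) ?_
  · have houter : Measurable fun p : ℝ × ℝ => (t - p.2) ^ (a - 1) := by fun_prop
    have hinner : Measurable fun p : ℝ × ℝ => (p.2 - p.1) ^ (b - 1) := by fun_prop
    exact houter.aestronglyMeasurable.smul (hinner.aestronglyMeasurable.smul
      (aestronglyMeasurable_fst_openTriangle (hg.aestronglyMeasurable ht)))
  · simp only [smul_smul]
    exact (intervalIntegrable_sub_rpow_mul_sub_rpow ha hb hs.2).smul_continuousOn
      continuousOn_const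
  · refine (hg.norm.const_mul (ProbabilityTheory.beta a b)).congr_uIoo fun s hs => ?_
    rw [Set.uIoo_of_le ht] at hs
    have hnorm : ∀ τ ∈ Set.Ioo s t, ‖(t - τ) ^ (a - 1) • (τ - s) ^ (b - 1) • g s‖
        = ((t - τ) ^ (a - 1) * (τ - s) ^ (b - 1)) * ‖g s‖ := fun τ hτ => by
      rw [smul_smul, norm_smul, Real.norm_of_nonneg (mul_nonneg
        (rpow_nonneg (sub_nonneg.2 hτ.2.le) _) (rpow_nonneg (sub_nonneg.2 hτ.1.le) _))]
    beta_reduce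
    rw [integral_congr_Ioo_of_le hs.2.le hnorm, intervalIntegral.integral_mul_const,
      integral_sub_rpow_mul_sub_rpow ha hb hs.2, norm_smul,
      Real.norm_of_nonneg (rpow_nonneg (sub_nonneg.2 hs.2.le) _)]
    ring

lemma sub_rpow_smul_jFrac (a b t τ : ℝ) (g : ℝ → E) :
    (t - τ) ^ (a - 1) • jFrac b g τ = (1 / Real.Gamma b) •
      ∫ s in (0:ℝ)..τ, (t - τ) ^ (a - 1) • (τ - s) ^ (b - 1) • g s := by
  rw [jFrac, smul_comm, intervalIntegral.integral_smul]

lemma JFracIntegrable.jFrac (ha : 0 < a) (hb : 0 < b) (ht : 0 ≤ t)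
    (hg : JFracIntegrable (a + b) g t) : JFracIntegrable a (jFrac b g) t := by
  simp only [JFracIntegrable, sub_rpow_smul_jFrac]
  exact (intervalIntegrable_integral_openTriangle ht
    (hg.integrableOn_openTriangle ha hb ht)).smul _

theorem jFrac_jFrac [CompleteSpace E] (ha : 0 < a) (hb : 0 < b) (ht : 0 ≤ t)
    (hg : JFracIntegrable (a + b) g t) : jFrac a (jFrac b g) t = jFrac (a + b) g t := by
  have hbeta : ∀ s ∈ Set.Ioo 0 t,
      ∫ τ in s..t, (t - τ) ^ (a - 1) • (τ - s) ^ (b - 1) • g s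
        = ProbabilityTheory.beta a b • (t - s) ^ (a + b - 1) • g s := fun s hs => by
    simp only [smul_smul]
    rw [intervalIntegral.integral_smul_const, integral_sub_rpow_mul_sub_rpow ha hb hs.2, mul_comm]
  have hΓa := (Real.Gamma_pos_of_pos ha).ne'
  have hΓb := (Real.Gamma_pos_of_pos hb).ne'
  rw [jFrac]
  simp only [sub_rpow_smul_jFrac]
  rw [intervalIntegral.integral_smul,
    integral_openTriangle_swap ht (hg.integrableOn_openTriangle ha hb ht),
    integral_congr_Ioo_of_le ht hbeta, intervalIntegral.integral_smul, jFrac, smul_smul, smul_smul,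
    ProbabilityTheory.beta]
  congr 1
  field_simp

section ContDiff

variable [CompleteSpace E] {f : ℝ → E}

lemma jFrac_eq_integral_jFrac_deriv (hb : 0 < b) (hf : ContDiff ℝ 1 f) (hf0 : f 0 = 0)
    (ht : 0 ≤ t) : jFrac b f t = ∫ s in (0:ℝ)..t, jFrac b (deriv f) s := by
  have hf' : Continuous (deriv f) := hf.continuous_deriv le_rfl
  have hprim : jFrac 1 (deriv f) = f := funext fun s => by
    rw [jFrac_one, intervalIntegral.integral_deriv_eq_sub
      (fun x _ => hf.differentiable one_ne_zero x) (hf'.intervalIntegrable _ _), hf0, sub_zero]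
  calc jFrac b f t = jFrac b (jFrac 1 (deriv f)) t := by rw [hprim]
    _ = jFrac (b + 1) (deriv f) t :=
        jFrac_jFrac hb one_pos ht (jFracIntegrable_of_continuousOn (by positivity) hf'.continuousOn)
    _ = jFrac 1 (jFrac b (deriv f)) t := by
        rw [add_comm, jFrac_jFrac one_pos hb ht
          (jFracIntegrable_of_continuousOn (by positivity) hf'.continuousOn)]
    _ = ∫ s in (0:ℝ)..t, jFrac b (deriv f) s := jFrac_one _ t

lemma hasDerivAt_jFrac (hb : 0 < b) (hf : ContDiff ℝ 1 f) (hf0 : f 0 = 0) (ht : 0 < t) :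
    HasDerivAt (jFrac b f) (jFrac b (deriv f) t) t := by
  have hcont : ∀ s, ContinuousOn (jFrac b (deriv f)) (Set.Icc 0 s) := fun _ =>
    continuousOn_jFrac hb (hf.continuous_deriv le_rfl).continuousOn
  have hcontIoo := (hcont (t + 1)).mono Set.Ioo_subset_Icc_self
  have hmem : t ∈ Set.Ioo 0 (t + 1) := ⟨ht, lt_add_one t⟩
  refine (integral_hasDerivAt_right ((hcont t).intervalIntegrable_of_Icc ht.le)
    (hcontIoo.stronglyMeasurableAtFilter isOpen_Ioo t hmem)
    (hcontIoo.continuousAt (isOpen_Ioo.mem_nhds hmem))).congr_of_eventuallyEq ?_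
  filter_upwards [lt_mem_nhds ht] with s hs using jFrac_eq_integral_jFrac_deriv hb hf hf0 hs.le

lemma intervalIntegrable_deriv_jFrac (hb : 0 < b) (hf : ContDiff ℝ 1 f) (hf0 : f 0 = 0)
    (ht : 0 ≤ t) : IntervalIntegrable (deriv (jFrac b f)) volume 0 t := by
  refine ((continuousOn_jFrac hb
    (hf.continuous_deriv le_rfl).continuousOn).intervalIntegrable_of_Icc ht).congr_uIoo
    fun s hs => ?_
  rw [Set.uIoo_of_le ht] at hs
  exact (hasDerivAt_jFrac hb hf hf0 hs.1).deriv.symm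

end ContDiff

end FractionalIntegral

section MittagLeffler

variable {E : Type*} [NormedAddCommGroup E] [NormedSpace ℝ E] {α β b s t : ℝ}

/-- The kernel `t^{β-1} E_{α,β}(t^α A)`: it is `S_α` for `β = 1`, and the kernel of the
Mittag-Leffler convolution in `integral_rep` for `β = α`. -/
noncomputable def opMLKernel (α β : ℝ) (A : E →L[ℝ] E) (t : ℝ) : E →L[ℝ] E :=
  t ^ (β - 1) • opML α β A t

lemma opNorm_pow_le (A : E →L[ℝ] E) (n : ℕ) : ‖A ^ n‖ ≤ ‖A‖ ^ n := by
  rcases n.eq_zero_or_pos with rfl | hn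
  · rw [pow_zero, pow_zero]
    exact ContinuousLinearMap.norm_id_le
  · exact norm_pow_le' A hn

lemma norm_opML_term_le (hα : 0 ≤ α) (hs : 0 ≤ s) (hst : s ≤ t) (A : E →L[ℝ] E) (n : ℕ) :
    ‖(s ^ ((n : ℝ) * α) / Real.Gamma (β + n * α)) • A ^ n‖
      ≤ ‖(t ^ α * ‖A‖) ^ n / Real.Gamma (β + n * α)‖ := by
  have ht : 0 ≤ t := hs.trans hst
  rw [mul_comm (n : ℝ), rpow_mul_natCast hs, norm_smul, norm_div, norm_div, div_mul_eq_mul_div,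
    Real.norm_of_nonneg (by positivity : 0 ≤ (s ^ α) ^ n),
    Real.norm_of_nonneg (by positivity : 0 ≤ (t ^ α * ‖A‖) ^ n), mul_pow]
  gcongr
  exact opNorm_pow_le A n

lemma norm_opMLKernel_term_apply_le (hα : 0 ≤ α) (hs : 0 ≤ s) (hst : s ≤ t) (A : E →L[ℝ] E)
    (n : ℕ) (x : E) :
    ‖s ^ (β - 1) • (s ^ ((n : ℝ) * α) / Real.Gamma (β + n * α)) • (A ^ n) x‖
      ≤ ‖(t ^ α * ‖A‖) ^ n / Real.Gamma (β + n * α)‖ * ‖s ^ (β - 1) • x‖ := by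
  have hterm := ContinuousLinearMap.le_of_opNorm_le _
    (norm_opML_term_le (β := β) hα hs hst A n) x
  calc _ ≤ ‖s ^ (β - 1)‖ * (‖(t ^ α * ‖A‖) ^ n / Real.Gamma (β + n * α)‖ * ‖x‖) := by
        rw [norm_smul]
        gcongr
        exact hterm
    _ = _ := by rw [norm_smul (s ^ (β - 1)), mul_left_comm]

lemma opMLKernel_term_apply (ht : 0 < t) (α β : ℝ) (A : E →L[ℝ] E) (n : ℕ) (x : E) :
    t ^ (β - 1) • (t ^ ((n : ℝ) * α) / Real.Gamma (β + n * α)) • (A ^ n) x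
      = (A ^ n) ((1 / Real.Gamma (β + n * α)) • t ^ (β + n * α - 1) • x) := by
  rw [add_sub_right_comm, rpow_add ht, map_smul, map_smul, smul_smul, smul_smul]
  congr 1
  ring

variable [CompleteSpace E]

lemma hasSum_opML (hα : 0 < α) (β : ℝ) (ht : 0 ≤ t) (A : E →L[ℝ] E) :
    HasSum (fun n : ℕ => (t ^ ((n : ℝ) * α) / Real.Gamma (β + n * α)) • A ^ n) (opML α β A t) :=
  ((summable_pow_div_Gamma hα β (t ^ α * ‖A‖)).norm.of_norm_bounded
    fun n => norm_opML_term_le hα.le ht le_rfl A n).hasSum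

lemma continuousOn_opML (hα : 0 < α) (β : ℝ) (A : E →L[ℝ] E) :
    ContinuousOn (opML α β A) (Set.Icc 0 t) := by
  refine continuousOn_tsum (fun n => ?_) (summable_pow_div_Gamma hα β (t ^ α * ‖A‖)).norm
    fun n s hs => norm_opML_term_le hα.le hs.1 hs.2 A n
  exact ((continuousOn_id.rpow_const fun _ _ => Or.inr (by positivity)).div_const _).smul
    continuousOn_const

lemma intervalIntegrable_opMLKernel (hα : 0 < α) (hβ : 0 < β) (ht : 0 ≤ t) (A : E →L[ℝ] E) :
    IntervalIntegrable (opMLKernel α β A) volume 0 t := by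
  refine (intervalIntegrable_rpow' (by linarith)).smul_continuousOn ?_
  rw [Set.uIcc_of_le ht]
  exact continuousOn_opML hα β A

lemma hasSum_opMLKernel_apply (hα : 0 < α) (β : ℝ) (ht : 0 ≤ t) (A : E →L[ℝ] E) (x : E) :
    HasSum (fun n : ℕ =>
        t ^ (β - 1) • (t ^ ((n : ℝ) * α) / Real.Gamma (β + n * α)) • (A ^ n) x)
      (opMLKernel α β A t x) :=
  ((hasSum_opML hα β ht A).mapL (ContinuousLinearMap.apply ℝ E x)).const_smul _

theorem hasSum_pow_jFrac (hα : 0 < α) (ht : 0 ≤ t) (A : E →L[ℝ] E) {g : ℝ → E}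
    (hg : JFracIntegrable β g t) :
    HasSum (fun n : ℕ => (A ^ n) (jFrac (β + n * α) g t))
      (∫ τ in (0:ℝ)..t, opMLKernel α β A (t - τ) (g τ)) := by
  set u : ℕ → ℝ := fun n => ‖(t ^ α * ‖A‖) ^ n / Real.Gamma (β + n * α)‖
  have hu : Summable u := (summable_pow_div_Gamma hα β _).norm
  set F : ℕ → ℝ → E := fun n τ => (t - τ) ^ (β - 1) •
    ((t - τ) ^ ((n : ℝ) * α) / Real.Gamma (β + n * α)) • (A ^ n) (g τ)
  set P : ℕ → ℝ → E := fun n τ =>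
    (1 / Real.Gamma (β + n * α)) • (t - τ) ^ (β + n * α - 1) • g τ
  have hFP : ∀ n, Set.EqOn (fun τ => (A ^ n) (P n τ)) (F n) (Set.uIoo 0 t) := fun n τ hτ =>
    (opMLKernel_term_apply (sub_pos.2 (Set.uIoo_of_le ht ▸ hτ).2) α β A n (g τ)).symm
  have hP : ∀ n, IntervalIntegrable (P n) volume 0 t := fun n =>
    (hg.mono ht (le_add_of_nonneg_right (by positivity))).smul _
  have hF : ∀ n, IntervalIntegrable (F n) volume 0 t := fun n =>
    IntervalIntegrable.congr_uIoo
      ⟨(A ^ n).integrable_comp (hP n).1, (A ^ n).integrable_comp (hP n).2⟩ (hFP n)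
  have hbound : ∀ n, ∀ τ ∈ Set.uIoc 0 t, ‖F n τ‖ ≤ u n * ‖(t - τ) ^ (β - 1) • g τ‖ := by
    intro n τ hτ
    rw [Set.uIoc_of_le ht] at hτ
    exact norm_opMLKernel_term_apply_le hα.le (sub_nonneg.2 hτ.2) (sub_le_self t hτ.1.le) A n (g τ)
  have hsum := intervalIntegral.hasSum_integral_of_dominated_convergence
    (fun n τ => u n * ‖(t - τ) ^ (β - 1) • g τ‖)
    (fun n => (intervalIntegrable_iff.1 (hF n)).aestronglyMeasurable)
    (fun n => .of_forall (hbound n)) (.of_forall fun _ _ => hu.mul_right _)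
    (by simpa only [tsum_mul_right] using hg.norm.const_mul (∑' n, u n))
    (.of_forall fun τ hτ => hasSum_opMLKernel_apply hα β
      (sub_nonneg.2 (Set.uIoc_of_le ht ▸ hτ).2) A (g τ))
  refine hsum.congr_fun fun n => ?_
  rw [← integral_congr_uIoo (hFP n), (A ^ n).intervalIntegral_comp_comm (hP n),
    intervalIntegral.integral_smul, jFrac]

theorem integral_opMLKernel (hα : 0 < α) (hβ : 0 < β) (ht : 0 ≤ t) (A : E →L[ℝ] E) :
    ∫ s in (0:ℝ)..t, opMLKernel α β A s = opMLKernel α (β + 1) A t := by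
  ext x
  have hleft : (∫ s in (0:ℝ)..t, opMLKernel α β A s) x
      = ∫ τ in (0:ℝ)..t, opMLKernel α β A (t - τ) x := by
    rw [ContinuousLinearMap.intervalIntegral_apply (intervalIntegrable_opMLKernel hα hβ ht A),
      intervalIntegral.integral_comp_sub_left (fun s => opMLKernel α β A s x), sub_self, sub_zero]
  rw [hleft]
  refine (hasSum_pow_jFrac hα ht A
    (jFracIntegrable_of_continuousOn hβ continuousOn_const)).unique
    ((hasSum_opMLKernel_apply hα (β + 1) ht A x).congr_fun fun n => ?_)
  rw [jFrac_const (by positivity), map_smul, smul_smul, add_sub_cancel_right,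
    rpow_add_of_nonneg ht hβ.le (by positivity), add_right_comm, mul_div_assoc]

theorem integral_opMLKernel_jFrac (hα : 0 < α) (hβ : 0 < β) (hb : 0 < b) (ht : 0 ≤ t)
    (A : E →L[ℝ] E) {g : ℝ → E} (hg : JFracIntegrable (β + b) g t) :
    ∫ τ in (0:ℝ)..t, opMLKernel α β A (t - τ) (jFrac b g τ)
      = ∫ τ in (0:ℝ)..t, opMLKernel α (β + b) A (t - τ) (g τ) := by
  refine (hasSum_pow_jFrac hα ht A (hg.jFrac hβ hb ht)).unique
    ((hasSum_pow_jFrac hα ht A hg).congr_fun fun n => ?_)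
  have hle : β + b ≤ β + n * α + b := by
    rw [add_right_comm]
    exact le_add_of_nonneg_right (by positivity)
  rw [jFrac_jFrac (by positivity) hb ht (hg.mono ht hle), add_right_comm]

end MittagLeffler

theorem integral_rep_general {E : Type*} [NormedAddCommGroup E] [NormedSpace ℝ E] [CompleteSpace E]
    {α t : ℝ} (hα : 1 < α) (ht : 0 ≤ t) (A : E →L[ℝ] E) {f : ℝ → E}
    (hf : ContinuousOn f (Set.Icc 0 t))
    (hdiff : DifferentiableOn ℝ (jFrac (α - 1) f) (Set.Ioo 0 t))
    (hint : IntervalIntegrable (deriv (jFrac (α - 1) f)) volume 0 t) :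
    ∫ τ in (0:ℝ)..t, (∫ u in (0:ℝ)..(t - τ), opML α 1 A u) (deriv (jFrac (α - 1) f) τ)
      = ∫ τ in (0:ℝ)..t, (t - τ) ^ (α - 1) • opML α α A (t - τ) (f τ) := by
  have hα0 : 0 < α := one_pos.trans hα
  have hα1 : 0 < α - 1 := sub_pos.2 hα
  have hJS : ∀ s, 0 ≤ s → ∫ u in (0:ℝ)..s, opML α 1 A u = opMLKernel α (1 + 1) A s :=
    fun s hs => by simpa [opMLKernel] using integral_opMLKernel hα0 one_pos hs A
  have hprim : ∀ τ ∈ Set.Ioo 0 t,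
      jFrac 1 (deriv (jFrac (α - 1) f)) τ = jFrac (α - 1) f τ := fun τ hτ => by
    rw [jFrac_one, integral_eq_sub_of_hasDerivAt_of_le hτ.1.le
      ((continuousOn_jFrac hα1 hf).mono (Set.Icc_subset_Icc_right hτ.2.le))
      (fun s hs => (hdiff.differentiableAt (Ioo_mem_nhds hs.1 (hs.2.trans hτ.2))).hasDerivAt)
      (hint.mono_set (Set.uIcc_subset_uIcc_left (Set.Icc_subset_uIcc ⟨hτ.1.le, hτ.2.le⟩)))]
    simp [jFrac]
  calc _ = ∫ τ in (0:ℝ)..t, opMLKernel α (1 + 1) A (t - τ) (deriv (jFrac (α - 1) f) τ) :=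
        integral_congr_Ioo_of_le ht fun τ hτ => by rw [hJS _ (sub_nonneg.2 hτ.2.le)]
    _ = ∫ τ in (0:ℝ)..t, opMLKernel α 1 A (t - τ) (jFrac 1 (deriv (jFrac (α - 1) f)) τ) :=
        (integral_opMLKernel_jFrac hα0 one_pos one_pos ht A
          ((jFracIntegrable_one_iff.2 hint).mono ht (by norm_num))).symm
    _ = ∫ τ in (0:ℝ)..t, opMLKernel α 1 A (t - τ) (jFrac (α - 1) f τ) :=
        integral_congr_Ioo_of_le ht fun τ hτ => by rw [hprim τ hτ]
    _ = ∫ τ in (0:ℝ)..t, opMLKernel α (1 + (α - 1)) A (t - τ) (f τ) :=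
        integral_opMLKernel_jFrac hα0 one_pos hα1 ht A
          (jFracIntegrable_of_continuousOn (by linarith) (by rwa [Set.uIcc_of_le ht]))
    _ = _ := by simp only [add_sub_cancel, opMLKernel, smul_apply]

/-- For `1 < α < 2` one has
`∫_0^t (J S_α)(t-τ) ^{RL}D^{2-α} f(τ) dτ = ∫_0^t (t-τ)^{α-1} E_{α,α}((t-τ)^α A) f(τ) dτ`,
where `J S_α(s) = ∫_0^s S_α(u) du` and `^{RL}D^{2-α} f = (d/dτ) J^{α-1} f`. -/
theorem integral_rep {E : Type*} [NormedAddCommGroup E] [NormedSpace ℝ E] [CompleteSpace E]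
    (α : ℝ) (hα₁ : 1 < α) (hα₂ : α < 2) (A : E →L[ℝ] E)
    (f : ℝ → E) (hf : ContDiff ℝ 1 f) (hf0 : f 0 = 0) :
    ∀ t ≥ (0 : ℝ),
      (∫ τ in (0:ℝ)..t, (∫ u in (0:ℝ)..(t - τ), opML α 1 A u) (deriv (jFrac (α - 1) f) τ))
        = ∫ τ in (0:ℝ)..t, (t - τ) ^ (α - 1) • opML α α A (t - τ) (f τ) := by
  intro t ht
  have hα : 0 < α - 1 := sub_pos.2 hα₁
  exact integral_rep_general hα₁ ht A hf.continuous.continuousOn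
    (fun τ hτ => (hasDerivAt_jFrac hα hf hf0 hτ.1).differentiableAt.differentiableWithinAt)
    (intervalIntegrable_deriv_jFrac hα hf hf0 ht)
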